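/- Fix an integer m ≥ 1 and a real l > 0. There exists a constant C > 0, independent of M and k, such that for every integer M ≥ 2, every integer k ≥ 1, and every m-times continuously differentiable function f : ℝ → ℝ, the Legendre wavelet projection Ψ_{k,M−1}(f) satisfies ‖f − Ψ_{k,M−1}(f)‖_{L²(0,l)} ≤ C (M−1)^{−m} |f|_{H^{0,m,M−1,k}(0,l)}. -/

import Mathlib

/-!
On each dyadic piece the wavelets are rescaled, normalised Legendre polynomials, so `Ψ_{k,M-1}(f)`
is, piece by piece, the `L²` projection onto polynomials of degree below `M` (`waveletProj_eq`).
Everything reduces to the best-approximation error of a function `g` on `[-1, 1]`.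

The first-order bound `M ‖g - π_M g‖ ≤ ‖g'‖` (`residual_first_order`) comes from the Legendre
operator `p ↦ ((x² - 1) p')'`: it is symmetric, preserves degrees and has eigenvectors `P_n` with
eigenvalues `n(n+1)`. A polynomial orthogonal to degrees below `M` therefore has Dirichlet energy
`∫ (1 - x²) p'²` at least `M² ‖p‖²` (`spectral_gap`), which gives the bound for polynomials
(`residual_polynomial`); Weierstrass approximation of `g'` extends it to `C¹` functions.

Higher orders follow without further Legendre theory (`residual_higher_order`). If `Q` is an
antiderivative of `π_{M-1} g'`, then `g` and `g - Q` have the same error, so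
`M ‖g - π_M g‖ ≤ ‖g' - π_{M-1} g'‖`. Iterating `p ≤ M` times gives the factor
`1 / (M (M-1) ⋯ (M-p+1))`, a reciprocal descending factorial.

Rescaling a piece of half-length `l / 2^k` and summing over pieces gives the error in terms of
`(l / 2^k)^p ‖f^(p)‖` (`wavelet_error`). The choice `p = min m M` selects the lowest term of the
seminorm, and for it the descending factorial is at least `(M-1)^m / m^m` (`descFactorial_bound`).
-/

open intervalIntegral

/-- The `m`-th Legendre polynomial, via Rodrigues' formula. -/
noncomputable def legendreP (m : ℕ) : ℝ → ℝ :=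
  fun x => (1 / ((2 : ℝ) ^ m * (Nat.factorial m : ℝ))) *
    iteratedDeriv m (fun y : ℝ => (y ^ 2 - 1) ^ m) x

/-- The Legendre wavelet `ψ_{n,m}` on `[0, l)` at resolution level `k`. -/
noncomputable def legWavelet (l : ℝ) (k n m : ℕ) : ℝ → ℝ :=
  fun x => if ((n : ℝ) - 1) * l / 2 ^ (k - 1) ≤ x ∧ x < (n : ℝ) * l / 2 ^ (k - 1) then
      (2 : ℝ) ^ ((k : ℝ) / 2) * Real.sqrt ((2 * (m : ℝ) + 1) / (2 * l)) *
        legendreP m (((2 : ℝ) ^ k / l) * x - 2 * (n : ℝ) + 1)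
    else 0

/-- The Legendre wavelet coefficient `a_{n,m} = ∫_0^l f ψ_{n,m}`. -/
noncomputable def waveletCoeff (l : ℝ) (k : ℕ) (f : ℝ → ℝ) (n m : ℕ) : ℝ :=
  ∫ x in (0 : ℝ)..l, f x * legWavelet l k n m x

/-- The Legendre wavelet projection `Ψ_{k,M-1}(f)`. -/
noncomputable def waveletProj (l : ℝ) (k M : ℕ) (f : ℝ → ℝ) : ℝ → ℝ :=
  fun x => ∑ n ∈ Finset.Icc 1 (2 ^ (k - 1)), ∑ m' ∈ Finset.range M,
    waveletCoeff l k f n m' * legWavelet l k n m' x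

/-- The seminorm `|f|_{H^{r,m,M-1,k}(0,l)}`. -/
noncomputable def semiNorm (l : ℝ) (r m M k : ℕ) (f : ℝ → ℝ) : ℝ :=
  Real.sqrt (∑ j ∈ Finset.Icc (min m M) m,
    ((2 : ℝ) ^ k) ^ (2 * (r : ℤ) - 2 * (j : ℤ)) *
      ∫ x in (0 : ℝ)..l, (iteratedDeriv j f x) ^ 2)

/-! ### Rodrigues' formula in `ℝ[X]` -/

open Polynomial in
/-- The functional `p ↦ ∫_{-1}^{1} p` on real polynomials, as a linear map. -/
noncomputable def polyInt : ℝ[X] →ₗ[ℝ] ℝ where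
  toFun p := ∫ x in (-1 : ℝ)..1, p.eval x
  map_add' p q := by
    simp only [Polynomial.eval_add]
    exact integral_add (p.continuous.intervalIntegrable _ _) (q.continuous.intervalIntegrable _ _)
  map_smul' c p := by simp

open Polynomial in
/-- The `n`-th Legendre polynomial as an element of `ℝ[X]`, again by Rodrigues' formula. -/
noncomputable def legPoly (n : ℕ) : ℝ[X] :=
  C (1 / ((2 : ℝ) ^ n * (n.factorial : ℝ))) * derivative^[n] ((X ^ 2 - 1) ^ n)

section PolynomialPart

open Polynomial

lemma legendreP_eq (n : ℕ) (x : ℝ) : legendreP n x = (legPoly n).eval x := by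
  have h : ∀ (j : ℕ) (p : ℝ[X]), iteratedDeriv j (fun y => p.eval y) = fun y =>
      (derivative^[j] p).eval y := by
    intro j
    induction j with
    | zero => intro p; simp
    | succ j ih =>
      intro p
      rw [iteratedDeriv_succ', Function.iterate_succ_apply, ← ih]
      congr 1
      ext y
      exact p.deriv
  have h2 := congrFun (h n ((X ^ 2 - 1) ^ n)) x
  simp only [eval_pow, eval_sub, eval_X, eval_one] at h2
  rw [legendreP, legPoly, eval_mul, eval_C, h2]

lemma polyInt_apply (p : ℝ[X]) : polyInt p = ∫ x in (-1 : ℝ)..1, p.eval x := rfl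

lemma polyInt_derivative (p : ℝ[X]) : polyInt (derivative p) = p.eval 1 - p.eval (-1) := by
  rw [polyInt_apply]
  exact integral_eq_sub_of_hasDerivAt (fun x _ => p.hasDerivAt x)
    (p.derivative.continuous.intervalIntegrable _ _)

lemma polyInt_parts (p q : ℝ[X]) (h1 : p.eval 1 = 0) (h2 : p.eval (-1) = 0) :
    polyInt (derivative p * q) = - polyInt (p * derivative q) := by
  have h := polyInt_derivative (p * q)
  rw [derivative_mul, map_add, eval_mul, eval_mul, h1, h2] at h
  linarith

lemma polyInt_sq_nonneg (p : ℝ[X]) : 0 ≤ polyInt (p * p) := by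
  rw [polyInt_apply]
  refine integral_nonneg (by norm_num) fun x _ => ?_
  rw [eval_mul]; exact mul_self_nonneg _

lemma eq_zero_of_polyInt_sq (p : ℝ[X]) (h : polyInt (p * p) = 0) : p = 0 := by
  by_contra hp
  have hpos : 0 < ∫ x in (-1 : ℝ)..1, (p * p).eval x := by
    obtain ⟨c, hc, hcp⟩ : ∃ c ∈ Set.Icc (-1 : ℝ) 1, p.eval c ≠ 0 := by
      by_contra! hz
      exact hp (eq_zero_of_infinite_isRoot p
        ((Set.Icc_infinite (by norm_num : (-1 : ℝ) < 1)).mono fun x hx => hz x hx))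
    refine integral_pos (by norm_num) (p * p).continuous.continuousOn (fun x _ => ?_) ⟨c, hc, ?_⟩
    · rw [eval_mul]; exact mul_self_nonneg _
    · rw [eval_mul]; exact mul_self_pos.2 hcp
  rw [polyInt_apply] at h
  linarith

/-- Moving `j ≤ n` derivatives off `(X² - 1)^n`: the boundary terms vanish because `±1` are zeros
of order `n`. -/
lemma polyInt_rodrigues (n j : ℕ) (hj : j ≤ n) (q : ℝ[X]) :
    polyInt (derivative^[j] ((X ^ 2 - 1) ^ n) * q) =
      (-1) ^ j * polyInt ((X ^ 2 - 1) ^ n * derivative^[j] q) := by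
  induction j generalizing q with
  | zero => simp
  | succ j ih =>
    have hdvd : (X ^ 2 - 1 : ℝ[X]) ∣ derivative^[j] ((X ^ 2 - 1) ^ n) :=
      (dvd_pow_self _ (by omega : n - j ≠ 0)).trans (pow_sub_dvd_iterate_derivative_pow _ n j)
    obtain ⟨r, hr⟩ := hdvd
    rw [Function.iterate_succ_apply', polyInt_parts _ _ (by simp [hr]) (by simp [hr]),
      ih (by omega), Function.iterate_succ_apply]
    ring

/-! ### Degree, orthogonality and norm of the Legendre polynomials -/

lemma natDegree_base (n : ℕ) : ((X ^ 2 - 1 : ℝ[X]) ^ n).natDegree = 2 * n := by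
  rw [natDegree_pow, show (X ^ 2 - 1 : ℝ[X]) = X ^ 2 - C 1 by simp, natDegree_X_pow_sub_C]
  ring

lemma coeff_base (n : ℕ) : ((X ^ 2 - 1 : ℝ[X]) ^ n).coeff (2 * n) = 1 := by
  have h : ((X ^ 2 - 1 : ℝ[X]) ^ n).Monic := by
    rw [show (X ^ 2 - 1 : ℝ[X]) = X ^ 2 - C 1 by simp]
    exact (monic_X_pow_sub_C 1 (by norm_num)).pow n
  have := h.coeff_natDegree
  rwa [natDegree_base] at this

lemma legPoly_coeff_self (n : ℕ) :
    (legPoly n).coeff n = ((2 * n).factorial : ℝ) / (2 ^ n * n.factorial * n.factorial) := by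
  rw [legPoly, coeff_C_mul, coeff_iterate_derivative, ← two_mul, coeff_base, nsmul_eq_mul, mul_one]
  have h := Nat.factorial_mul_descFactorial (show n ≤ 2 * n by omega)
  rw [show 2 * n - n = n by omega] at h
  rw [← h]
  push_cast
  have := n.factorial_ne_zero
  field_simp

lemma legPoly_coeff_ne (n : ℕ) : (legPoly n).coeff n ≠ 0 := by
  rw [legPoly_coeff_self]; positivity

lemma legPoly_mem (n : ℕ) : legPoly n ∈ degreeLT ℝ (n + 1) := by
  rw [mem_degreeLT, degree_lt_iff_coeff_zero]
  intro i hi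
  rw [legPoly, coeff_C_mul, coeff_iterate_derivative, coeff_eq_zero_of_natDegree_lt]
  · simp
  · rw [natDegree_base]; omega

lemma legPoly_mem_of_lt {n M : ℕ} (h : n < M) : legPoly n ∈ degreeLT ℝ M :=
  degreeLT_mono h (legPoly_mem n)

/-- Every polynomial of degree at most `N` is a multiple of `P_N` plus one of degree below `N`. -/
lemma exists_sub_legPoly_mem (N : ℕ) (q : ℝ[X]) (hq : q ∈ degreeLT ℝ (N + 1)) :
    ∃ c : ℝ, q - c • legPoly N ∈ degreeLT ℝ N := by
  refine ⟨q.coeff N / (legPoly N).coeff N, ?_⟩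
  have h := (degreeLT ℝ (N + 1)).sub_mem hq
    ((degreeLT ℝ (N + 1)).smul_mem (q.coeff N / (legPoly N).coeff N) (legPoly_mem N))
  rw [mem_degreeLT, degree_lt_iff_coeff_zero] at h ⊢
  intro i hi
  rcases hi.eq_or_lt with rfl | hi
  · simp [div_mul_cancel₀ _ (legPoly_coeff_ne N)]
  · exact h i hi

lemma polyInt_legPoly_mul_eq_zero (n : ℕ) (q : ℝ[X]) (hq : q ∈ degreeLT ℝ n) :
    polyInt (legPoly n * q) = 0 := by
  rw [mem_degreeLT] at hq
  rw [legPoly, mul_assoc, ← smul_eq_C_mul, map_smul, polyInt_rodrigues n n le_rfl,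
    iterate_derivative_eq_zero_of_degree_lt hq]
  simp

lemma polyInt_legPoly_ne {i j : ℕ} (h : i ≠ j) : polyInt (legPoly i * legPoly j) = 0 := by
  rcases h.lt_or_gt with h | h
  · rw [mul_comm]; exact polyInt_legPoly_mul_eq_zero _ _ (legPoly_mem_of_lt h)
  · exact polyInt_legPoly_mul_eq_zero _ _ (legPoly_mem_of_lt h)

/-- The Wallis-type integral `∫_{-1}^{1} (x² - 1)^n`. The recursion comes from differentiating
`x (x² - 1)^(n+1)`, which vanishes at both endpoints. -/
lemma polyInt_base (n : ℕ) : (-1) ^ n * polyInt ((X ^ 2 - 1) ^ n) * ((2 * n).factorial : ℝ) *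
    (2 * n + 1) = 2 * (2 ^ n * n.factorial) ^ 2 := by
  induction n with
  | zero =>
    have := polyInt_derivative (X : ℝ[X])
    simp at this
    simp [this]; norm_num
  | succ n ih =>
    have h := polyInt_derivative (X * (X ^ 2 - 1) ^ (n + 1) : ℝ[X])
    have h2 : derivative (X * (X ^ 2 - 1) ^ (n + 1) : ℝ[X]) =
        (2 * n + 3 : ℝ) • (X ^ 2 - 1) ^ (n + 1) + (2 * n + 2 : ℝ) • (X ^ 2 - 1) ^ n := by
      simp only [smul_eq_C_mul, derivative_mul, derivative_X,
        derivative_pow_succ, derivative_sub, derivative_one]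
      simp only [map_add, map_mul, map_ofNat, map_natCast, map_one]
      push_cast
      ring
    rw [h2, map_add, map_smul, map_smul] at h
    simp at h
    rw [show 2 * (n + 1) = 2 * n + 1 + 1 by ring, Nat.factorial_succ, Nat.factorial_succ,
      Nat.factorial_succ]
    push_cast
    have e : (2 * (n : ℝ) + 3) * polyInt ((X ^ 2 - 1) ^ (n + 1)) =
      - ((2 * n + 2) * polyInt ((X ^ 2 - 1) ^ n)) := by linarith
    linear_combination (-(-1 : ℝ) ^ n * (2 * n + 1 + 1) * (2 * n + 1) * (2 * n).factorial) * e +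
      (2 * (n : ℝ) + 2) ^ 2 * ih

lemma polyInt_legPoly_self (n : ℕ) :
    polyInt (legPoly n * legPoly n) = 2 / (2 * n + 1) := by
  have hD : derivative^[n] (legPoly n) =
      C (((2 * n).factorial : ℝ) / (2 ^ n * n.factorial)) := by
    ext i
    rw [coeff_iterate_derivative, coeff_C]
    split_ifs with hi
    · subst hi
      rw [zero_add, legPoly_coeff_self, Nat.descFactorial_self, nsmul_eq_mul]
      have := n.factorial_ne_zero
      field_simp
    · have := legPoly_mem n
      rw [mem_degreeLT, degree_lt_iff_coeff_zero] at this
      rw [this _ (by omega), smul_zero]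
  conv_lhs => arg 2; arg 1; rw [legPoly]
  rw [mul_assoc, ← smul_eq_C_mul, map_smul, polyInt_rodrigues n n le_rfl, hD, mul_comm _ (C _),
    ← smul_eq_C_mul, map_smul]
  have h := polyInt_base n
  have := n.factorial_ne_zero
  simp only [smul_eq_mul]
  field_simp
  linear_combination h

/-! ### The Legendre differential operator and its spectral gap -/

/-- The Legendre differential operator `p ↦ ((x² - 1) p')'`. -/
noncomputable def legOp (p : ℝ[X]) : ℝ[X] := derivative ((X ^ 2 - 1) * derivative p)

lemma legOp_coeff (p : ℝ[X]) (i : ℕ) : (legOp p).coeff i =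
    (i : ℝ) * (i + 1) * p.coeff i - (i + 2) * (i + 1) * p.coeff (i + 2) := by
  rw [legOp, coeff_derivative, sub_mul, one_mul, coeff_sub, coeff_derivative (n := i + 1)]
  have : (X ^ 2 * derivative p).coeff (i + 1) = i * p.coeff i := by
    rcases i with _ | i
    · simp [coeff_X_pow_mul']
    · rw [show i + 1 + 1 = i + 2 by ring, coeff_X_pow_mul, coeff_derivative]
      push_cast; ring
  rw [this]
  push_cast
  ring

lemma legOp_mem {M : ℕ} {p : ℝ[X]} (hp : p ∈ degreeLT ℝ M) : legOp p ∈ degreeLT ℝ M := by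
  rw [mem_degreeLT, degree_lt_iff_coeff_zero] at hp ⊢
  intro i hi
  rw [legOp_coeff, hp i hi, hp (i + 2) (by omega)]
  simp

lemma polyInt_legOp (p q : ℝ[X]) : polyInt (legOp p * q) =
    polyInt ((1 - X ^ 2) * derivative p * derivative q) := by
  rw [legOp, polyInt_parts _ _ (by simp) (by simp), ← map_neg]
  congr 1; ring

lemma polyInt_legOp_comm (p q : ℝ[X]) : polyInt (legOp p * q) = polyInt (p * legOp q) := by
  rw [polyInt_legOp, mul_comm p, polyInt_legOp]
  congr 1; ring

lemma legOp_add (p q : ℝ[X]) : legOp (p + q) = legOp p + legOp q := by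
  simp [legOp, mul_add]

lemma legOp_smul (c : ℝ) (p : ℝ[X]) : legOp (c • p) = c • legOp p := by
  simp [legOp]

/-- Legendre's equation. The remainder `legOp P_n - n(n+1) P_n` has degree below `n` and is
orthogonal to everything of degree below `n`, hence to itself. -/
lemma legOp_legPoly (n : ℕ) : legOp (legPoly n) = ((n : ℝ) * (n + 1)) • legPoly n := by
  rw [← sub_eq_zero]
  set r := legOp (legPoly n) - ((n : ℝ) * (n + 1)) • legPoly n with hr
  have hmem : r ∈ degreeLT ℝ n := by
    have h := legPoly_mem n
    rw [mem_degreeLT, degree_lt_iff_coeff_zero] at h ⊢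
    intro i hi
    rw [hr, coeff_sub, legOp_coeff, coeff_smul, smul_eq_mul, h (i + 2) (by omega)]
    rcases hi.eq_or_lt with rfl | hi
    · ring
    · rw [h i hi]; ring
  apply eq_zero_of_polyInt_sq
  conv_lhs => arg 2; arg 1; rw [hr]
  rw [sub_mul, map_sub, polyInt_legOp_comm, polyInt_legPoly_mul_eq_zero n _ (legOp_mem hmem),
    smul_mul_assoc, map_smul, polyInt_legPoly_mul_eq_zero n _ hmem]
  simp

/-- Spectral gap: a polynomial orthogonal to degrees below `M` only has modes with eigenvalue
`n(n+1) ≥ M²`. -/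
lemma spectral_gap (M N : ℕ) (h : ℝ[X]) (hN : h ∈ degreeLT ℝ N)
    (horth : ∀ q ∈ degreeLT ℝ M, polyInt (h * q) = 0) :
    (M : ℝ) ^ 2 * polyInt (h * h) ≤ polyInt (legOp h * h) := by
  induction N generalizing h with
  | zero =>
    rw [mem_degreeLT, degree_lt_iff_coeff_zero] at hN
    have : h = 0 := by ext i; simpa using hN i (by omega)
    simp [this]
  | succ N ih =>
    rcases lt_or_ge N M with hNM | hNM
    · have : h = 0 := eq_zero_of_polyInt_sq _ (horth h (degreeLT_mono hNM hN))
      simp [this, legOp]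
    · obtain ⟨c, hc⟩ := exists_sub_legPoly_mem N h hN
      set g := h - c • legPoly N with hg
      have hh : h = g + c • legPoly N := by rw [hg]; ring
      have hPq : ∀ q ∈ degreeLT ℝ N, polyInt (legPoly N * q) = 0 :=
        polyInt_legPoly_mul_eq_zero N
      have key := ih g hc (by
        intro q hq
        rw [hg, sub_mul, map_sub, horth q hq, smul_mul_assoc, map_smul,
          hPq q (degreeLT_mono hNM hq)]
        simp)
      have e1 : polyInt (h * h) = polyInt (g * g) + c ^ 2 * polyInt (legPoly N * legPoly N) := by
        have : h * h = g * g + (2 * c) • (legPoly N * g) + c ^ 2 • (legPoly N * legPoly N) := by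
          rw [hh]; simp only [smul_eq_C_mul, map_mul, map_pow, map_ofNat]; ring
        rw [this, map_add, map_add, map_smul, map_smul, hPq g hc]
        simp
      have e2 : polyInt (legOp h * h) = polyInt (legOp g * g) +
          (N : ℝ) * (N + 1) * (c ^ 2 * polyInt (legPoly N * legPoly N)) := by
        have : legOp h * h = legOp g * g + c • (legPoly N * legOp g) +
            (c * (N * (N + 1))) • (legPoly N * g) +
            (N * (N + 1) * c ^ 2 : ℝ) • (legPoly N * legPoly N) := by
          rw [hh, legOp_add, legOp_smul, legOp_legPoly]
          simp only [smul_eq_C_mul, map_mul, map_pow, map_add]; ring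
        rw [this, map_add, map_add, map_add, map_smul, map_smul, map_smul, hPq g hc,
          hPq _ (legOp_mem hc)]
        simp; ring
      rw [e1, e2]
      have h1 : (M : ℝ) ^ 2 ≤ (N : ℝ) * (N + 1) := by
        have : (M : ℝ) ≤ N := by exact_mod_cast hNM
        nlinarith [(Nat.cast_nonneg M : (0 : ℝ) ≤ M)]
      have h2 := mul_nonneg (sq_nonneg c) (polyInt_sq_nonneg (legPoly N))
      nlinarith [mul_le_mul_of_nonneg_right h1 h2]

end PolynomialPart

/-! ### Approximation on the reference interval `[-1, 1]` -/

section ReferenceInterval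

open Polynomial

/-- The moment functional `q ↦ ∫_{-1}^{1} g q` of a continuous function `g`. -/
noncomputable def momentInt (g : ℝ → ℝ) (hg : Continuous g) : ℝ[X] →ₗ[ℝ] ℝ where
  toFun q := ∫ x in (-1 : ℝ)..1, g x * q.eval x
  map_add' p q := by
    simp only [Polynomial.eval_add, mul_add]
    exact intervalIntegral.integral_add ((hg.mul p.continuous).intervalIntegrable _ _)
      ((hg.mul q.continuous).intervalIntegrable _ _)
  map_smul' c p := by
    simp only [Polynomial.eval_smul, smul_eq_mul, RingHom.id_apply, mul_left_comm _ c]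
    exact intervalIntegral.integral_const_mul _ _

lemma momentInt_apply (g : ℝ → ℝ) (hg : Continuous g) (q : ℝ[X]) :
    momentInt g hg q = ∫ x in (-1 : ℝ)..1, g x * q.eval x := rfl

/-- The truncated Legendre expansion of `g` on `[-1, 1]`, using `P_0, …, P_{M-1}`. -/
noncomputable def legProj (M : ℕ) (g : ℝ → ℝ) : ℝ[X] :=
  ∑ n ∈ Finset.range M,
    ((2 * n + 1 : ℝ) / 2 * ∫ x in (-1 : ℝ)..1, g x * (legPoly n).eval x) • legPoly n

lemma legProj_mem (M : ℕ) (g : ℝ → ℝ) : legProj M g ∈ degreeLT ℝ M :=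
  Submodule.sum_mem _ fun _ hn =>
    Submodule.smul_mem _ _ (legPoly_mem_of_lt (Finset.mem_range.1 hn))

lemma linearMap_eq_zero_of_legPoly (φ : ℝ[X] →ₗ[ℝ] ℝ) (M : ℕ)
    (h : ∀ i < M, φ (legPoly i) = 0) (q : ℝ[X]) (hq : q ∈ degreeLT ℝ M) : φ q = 0 := by
  induction M generalizing q with
  | zero =>
    rw [mem_degreeLT, degree_lt_iff_coeff_zero] at hq
    have : q = 0 := by ext i; simpa using hq i (by omega)
    simp [this]
  | succ M ih =>
    obtain ⟨c, hc⟩ := exists_sub_legPoly_mem M q hq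
    have h1 := ih (fun i hi => h i (by omega)) _ hc
    rw [map_sub, map_smul, h M (by omega), smul_zero, sub_zero] at h1
    exact h1

/-- `legProj M g` has the same moments as `g` against polynomials of degree below `M`, because
`∫ P_n² = 2/(2n+1)` matches the normalisation of the expansion. -/
lemma momentInt_eq_polyInt (M : ℕ) (g : ℝ → ℝ) (hg : Continuous g) (q : ℝ[X])
    (hq : q ∈ degreeLT ℝ M) : momentInt g hg q = polyInt (legProj M g * q) := by
  have key := linearMap_eq_zero_of_legPoly
    (momentInt g hg - polyInt.comp (LinearMap.mulLeft ℝ (legProj M g))) M ?_ q hq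
  · simpa [sub_eq_zero] using key
  intro i hi
  have hs : polyInt (legProj M g * legPoly i) = momentInt g hg (legPoly i) := by
    rw [legProj, Finset.sum_mul, map_sum, Finset.sum_eq_single_of_mem i (Finset.mem_range.2 hi)]
    · rw [smul_mul_assoc, map_smul, polyInt_legPoly_self, momentInt_apply, smul_eq_mul]
      field_simp
    · intro j _ hj
      rw [smul_mul_assoc, map_smul, polyInt_legPoly_ne hj, smul_zero]
  simp [hs]

lemma integral_residual_mul (M : ℕ) (g : ℝ → ℝ) (hg : Continuous g) (q : ℝ[X])
    (hq : q ∈ degreeLT ℝ M) :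
    ∫ x in (-1 : ℝ)..1, (g x - (legProj M g).eval x) * q.eval x = 0 := by
  have h := momentInt_eq_polyInt M g hg q hq
  rw [momentInt_apply, polyInt_apply] at h
  simp only [eval_mul] at h
  have cs := (legProj M g).continuous
  have cq := q.continuous
  simp only [sub_mul]
  rw [intervalIntegral.integral_sub (Continuous.intervalIntegrable (by fun_prop) _ _)
    (Continuous.intervalIntegrable (by fun_prop) _ _), h, sub_self]

/-- The truncated Legendre expansion is the best `L²` approximation of degree below `M`. -/
lemma integral_residual_sq_le (M : ℕ) (g : ℝ → ℝ) (hg : Continuous g) (q : ℝ[X])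
    (hq : q ∈ degreeLT ℝ M) :
    ∫ x in (-1 : ℝ)..1, (g x - (legProj M g).eval x) ^ 2 ≤
      ∫ x in (-1 : ℝ)..1, (g x - q.eval x) ^ 2 := by
  have h0 := integral_residual_mul M g hg (legProj M g - q)
    ((degreeLT ℝ M).sub_mem (legProj_mem M g) hq)
  set s := legProj M g
  have cs := s.continuous
  have cq := q.continuous
  have e : ∀ x, (g x - q.eval x) ^ 2 = ((g x - s.eval x) ^ 2 + (s.eval x - q.eval x) ^ 2) +
      2 * ((g x - s.eval x) * (s - q).eval x) := by
    intro x; rw [eval_sub]; ring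
  have hnn : 0 ≤ ∫ x in (-1 : ℝ)..1, (s.eval x - q.eval x) ^ 2 :=
    intervalIntegral.integral_nonneg (by norm_num) fun x _ => sq_nonneg _
  simp_rw [e]
  rw [intervalIntegral.integral_add (Continuous.intervalIntegrable (by fun_prop) _ _)
    (Continuous.intervalIntegrable (by fun_prop) _ _),
    intervalIntegral.integral_add (Continuous.intervalIntegrable (by fun_prop) _ _)
    (Continuous.intervalIntegrable (by fun_prop) _ _),
    intervalIntegral.integral_const_mul, h0]
  linarith

/-- First-order estimate for polynomials. With `s` the projection and `e = h - s`, the Dirichlet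
form `∫ (1 - x²) p' q'` makes `s` and `e` orthogonal as well, so the spectral gap for `e` bounds
the error by the Dirichlet energy of `h`. -/
lemma residual_polynomial (M : ℕ) (h : ℝ[X]) :
    (M : ℝ) ^ 2 * ∫ x in (-1 : ℝ)..1, (h.eval x - (legProj M (fun y => h.eval y)).eval x) ^ 2 ≤
      ∫ x in (-1 : ℝ)..1, (derivative h).eval x ^ 2 := by
  set s := legProj M (fun y => h.eval y) with hs
  have hsm : s ∈ degreeLT ℝ M := legProj_mem M _
  set e := h - s with he
  have horth : ∀ q ∈ degreeLT ℝ M, polyInt (e * q) = 0 := by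
    intro q hq
    have := integral_residual_mul M _ h.continuous q hq
    rw [polyInt_apply, ← this]
    simp [he, hs]
  have hN : e ∈ degreeLT ℝ (e.natDegree + 1) := by
    rw [mem_degreeLT]
    exact lt_of_le_of_lt degree_le_natDegree (by exact_mod_cast Nat.lt_succ_self _)
  have gap := spectral_gap M _ e hN horth
  have hh : h = e + s := by rw [he]; ring
  have split : polyInt (legOp h * h) = polyInt (legOp e * e) + polyInt (legOp s * s) := by
    have c1 : polyInt (legOp e * s) = 0 := by
      rw [polyInt_legOp_comm, horth _ (legOp_mem hsm)]
    have c2 : polyInt (legOp s * e) = 0 := by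
      rw [mul_comm, horth _ (legOp_mem hsm)]
    rw [hh, legOp_add, add_mul, mul_add, mul_add, map_add, map_add, map_add, c1, c2]
    ring
  have hsnn : 0 ≤ polyInt (legOp s * s) := by
    rw [polyInt_legOp, polyInt_apply]
    refine intervalIntegral.integral_nonneg (by norm_num) fun x hx => ?_
    simp only [eval_mul, eval_sub, eval_one, eval_pow, eval_X, mul_assoc]
    exact mul_nonneg (by nlinarith [hx.1, hx.2]) (mul_self_nonneg _)
  have hle : polyInt (legOp h * h) ≤ ∫ x in (-1 : ℝ)..1, (derivative h).eval x ^ 2 := by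
    rw [polyInt_legOp, polyInt_apply]
    refine intervalIntegral.integral_mono_on (by norm_num)
      ((Polynomial.continuous _).intervalIntegrable _ _)
      (((Polynomial.continuous _).pow 2).intervalIntegrable _ _) fun x _ => ?_
    simp only [eval_mul, eval_sub, eval_one, eval_pow, eval_X]
    nlinarith [mul_nonneg (sq_nonneg x) (sq_nonneg ((derivative h).eval x))]
  have hee : ∫ x in (-1 : ℝ)..1, (h.eval x - s.eval x) ^ 2 = polyInt (e * e) := by
    rw [polyInt_apply]
    congr 1; ext x; simp [he]; ring
  rw [hee]
  linarith

lemma exists_antiderivative (M : ℕ) (q : ℝ[X]) (hq : q ∈ degreeLT ℝ M) :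
    ∃ Q ∈ degreeLT ℝ (M + 1), derivative Q = q := by
  refine ⟨∑ i ∈ Finset.range M, C (q.coeff i / (i + 1)) * X ^ (i + 1), ?_, ?_⟩
  · refine Submodule.sum_mem _ fun i hi => ?_
    rw [mem_degreeLT]
    refine (degree_C_mul_X_pow_le _ _).trans_lt ?_
    have := Finset.mem_range.1 hi
    exact_mod_cast (by omega : i + 1 < M + 1)
  · ext i
    rw [mem_degreeLT, degree_lt_iff_coeff_zero] at hq
    rw [coeff_derivative, finsetSum_coeff]
    simp only [coeff_C_mul_X_pow, Nat.add_right_cancel_iff]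
    rw [Finset.sum_ite_eq]
    split_ifs with hi
    · have : (i : ℝ) + 1 ≠ 0 := by positivity
      field_simp
    · rw [zero_mul, hq i (by simpa using hi)]

lemma sq_le_young {a b δ : ℝ} (hδ : 0 < δ) :
    a ^ 2 ≤ (1 + δ) * b ^ 2 + (1 + 1 / δ) * (a - b) ^ 2 := by
  have : (1 + δ) * b ^ 2 + (1 + 1 / δ) * (a - b) ^ 2 - a ^ 2 = (δ * b - (a - b)) ^ 2 / δ := by
    field_simp; ring
  have h2 : 0 ≤ (δ * b - (a - b)) ^ 2 / δ := by positivity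
  linarith

/-- Integrated Young inequality: functions uniformly close on `[-1, 1]` have close `L²` norms. -/
lemma integral_young {u v : ℝ → ℝ} (hu : Continuous u) (hv : Continuous v) {δ η : ℝ} (hδ : 0 < δ)
    (h : ∀ x ∈ Set.Icc (-1 : ℝ) 1, (u x - v x) ^ 2 ≤ η) :
    ∫ x in (-1 : ℝ)..1, u x ^ 2 ≤
      (1 + δ) * (∫ x in (-1 : ℝ)..1, v x ^ 2) + (1 + 1 / δ) * (2 * η) := by
  have hle : ∫ x in (-1 : ℝ)..1, u x ^ 2 ≤
      ∫ x in (-1 : ℝ)..1, ((1 + δ) * v x ^ 2 + (1 + 1 / δ) * η) := by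
    refine intervalIntegral.integral_mono_on (by norm_num)
      (Continuous.intervalIntegrable (by fun_prop) _ _)
      (Continuous.intervalIntegrable (by fun_prop) _ _) fun x hx => ?_
    refine (sq_le_young (b := v x) hδ).trans ?_
    have : 0 ≤ 1 + 1 / δ := by positivity
    have := mul_le_mul_of_nonneg_left (h x hx) this
    linarith
  refine hle.trans_eq ?_
  rw [intervalIntegral.integral_add (Continuous.intervalIntegrable (by fun_prop) _ _)
    (Continuous.intervalIntegrable (by fun_prop) _ _), intervalIntegral.integral_const_mul,
    intervalIntegral.integral_const]
  simp only [smul_eq_mul]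
  ring

/-- First-order estimate for `C¹` functions, by Weierstrass approximation of the derivative. -/
lemma residual_first_order (M : ℕ) (g : ℝ → ℝ) (hg : ContDiff ℝ 1 g) :
    (M : ℝ) ^ 2 * ∫ x in (-1 : ℝ)..1, (g x - (legProj M g).eval x) ^ 2 ≤
      ∫ x in (-1 : ℝ)..1, deriv g x ^ 2 := by
  have cg := hg.continuous
  have cg' : Continuous (deriv g) := hg.continuous_deriv le_rfl
  set A := ∫ x in (-1 : ℝ)..1, (g x - (legProj M g).eval x) ^ 2
  set G := ∫ x in (-1 : ℝ)..1, deriv g x ^ 2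
  -- The two Young inequalities below cost `(1 + 1/δ) δ² = δ² + δ`, which tends to zero.
  have bound : ∀ δ : ℝ, 0 < δ → (M : ℝ) ^ 2 * A ≤
      (1 + δ) * ((1 + δ) * G + 2 * (δ ^ 2 + δ)) + (M : ℝ) ^ 2 * (8 * (δ ^ 2 + δ)) := by
    intro δ hδ
    obtain ⟨r, hr⟩ := exists_polynomial_near_of_continuousOn (-1) 1 (deriv g) cg'.continuousOn δ hδ
    have hrm : r ∈ degreeLT ℝ (r.natDegree + 1) := by
      rw [mem_degreeLT]
      exact lt_of_le_of_lt degree_le_natDegree (by exact_mod_cast Nat.lt_succ_self _)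
    obtain ⟨R, -, hR⟩ := exists_antiderivative _ r hrm
    set h := R + C (g (-1) - R.eval (-1)) with hh
    have hd : derivative h = r := by simp [hh, hR]
    have hclose : ∀ x ∈ Set.Icc (-1 : ℝ) 1, |g x - h.eval x| ≤ 2 * δ := by
      intro x hx
      have e : g x - h.eval x = ∫ t in (-1 : ℝ)..x, (deriv g t - r.eval t) := by
        rw [intervalIntegral.integral_eq_sub_of_hasDerivAt
          (f := fun t => g t - h.eval t)
          (fun t _ => ((hg.differentiable one_ne_zero t).hasDerivAt.sub
            (by simpa [hd] using h.hasDerivAt t)))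
          ((cg'.sub r.continuous).intervalIntegrable _ _)]
        simp [hh]
      have hb := intervalIntegral.norm_integral_le_of_norm_le_const
        (a := -1) (b := x) (f := fun t => deriv g t - r.eval t) (C := δ) (by
          intro t ht
          rw [Set.uIoc_of_le hx.1] at ht
          rw [Real.norm_eq_abs, abs_sub_comm]
          exact (hr t ⟨ht.1.le, ht.2.trans hx.2⟩).le)
      rw [e]
      rw [Real.norm_eq_abs] at hb
      refine hb.trans ?_
      rw [abs_of_nonneg (by linarith [hx.1])]
      nlinarith [hx.2]
    set s := legProj M (fun y => h.eval y) with hs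
    have s1 : A ≤ ∫ x in (-1 : ℝ)..1, (g x - s.eval x) ^ 2 :=
      integral_residual_sq_le M g cg s (legProj_mem M _)
    have s2 := integral_young (u := fun x => g x - s.eval x) (v := fun x => h.eval x - s.eval x)
      (cg.sub s.continuous) (h.continuous.sub s.continuous) hδ (η := (2 * δ) ^ 2) (by
        intro x hx
        rw [sub_sub_sub_cancel_right, ← sq_abs]
        exact pow_le_pow_left₀ (abs_nonneg _) (hclose x hx) 2)
    have s3 := residual_polynomial M h
    rw [hd] at s3
    have s4 := integral_young (u := fun x => r.eval x) (v := deriv g) r.continuous cg' hδ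
      (η := δ ^ 2) (by
        intro x hx
        rw [← sq_abs]
        exact pow_le_pow_left₀ (abs_nonneg _) (hr x hx).le 2)
    have w1 : (1 + 1 / δ) * (2 * (2 * δ) ^ 2) = 8 * (δ ^ 2 + δ) := by field_simp; ring
    have w2 : (1 + 1 / δ) * (2 * δ ^ 2) = 2 * (δ ^ 2 + δ) := by field_simp
    rw [w1] at s2
    rw [w2] at s4
    have s5 := mul_le_mul_of_nonneg_left (s1.trans s2) (sq_nonneg (M : ℝ))
    have s6 := mul_le_mul_of_nonneg_left (s3.trans s4) (by positivity : 0 ≤ 1 + δ)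
    linarith
  have hlim : Filter.Tendsto (fun δ : ℝ => (1 + δ) * ((1 + δ) * G + 2 * (δ ^ 2 + δ)) +
      (M : ℝ) ^ 2 * (8 * (δ ^ 2 + δ))) (nhdsWithin 0 (Set.Ioi 0)) (nhds G) := by
    have : Continuous (fun δ : ℝ => (1 + δ) * ((1 + δ) * G + 2 * (δ ^ 2 + δ)) +
      (M : ℝ) ^ 2 * (8 * (δ ^ 2 + δ))) := by fun_prop
    have h := (this.tendsto 0).mono_left (nhdsWithin_le_nhds (s := Set.Ioi 0))
    simpa using h
  exact ge_of_tendsto hlim (Filter.eventually_of_mem self_mem_nhdsWithin fun δ hδ => bound δ hδ)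

/-- The residual of `g` is no larger than that of `g - Q` when `deg Q < M` (they are in fact equal,
but only this inequality is used). -/
lemma legProj_sub (M : ℕ) (g : ℝ → ℝ) (hg : Continuous g) (Q : ℝ[X]) (hQ : Q ∈ degreeLT ℝ M) :
    ∫ x in (-1 : ℝ)..1, (g x - (legProj M g).eval x) ^ 2 ≤
      ∫ x in (-1 : ℝ)..1, (g x - Q.eval x - (legProj M (fun y => g y - Q.eval y)).eval x) ^ 2 := by
  refine (integral_residual_sq_le M g hg (Q + legProj M (fun y => g y - Q.eval y))
    ((degreeLT ℝ M).add_mem hQ (legProj_mem M _))).trans_eq ?_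
  simp only [eval_add, sub_sub]

/-- Higher-order estimate. Subtracting from `g` an antiderivative of the projection of `g'` turns
the first-order estimate for `g` into the error of `g'`, at the cost of one polynomial degree. -/
lemma residual_higher_order (p M : ℕ) (hpM : p ≤ M) (g : ℝ → ℝ) (hg : ContDiff ℝ p g) :
    (M.descFactorial p : ℝ) ^ 2 * ∫ x in (-1 : ℝ)..1, (g x - (legProj M g).eval x) ^ 2 ≤
      ∫ x in (-1 : ℝ)..1, iteratedDeriv p g x ^ 2 := by
  induction p generalizing M g with
  | zero =>
    have := integral_residual_sq_le M g hg.continuous 0 (Submodule.zero_mem _)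
    simpa using this
  | succ p ih =>
    obtain ⟨M, rfl⟩ : ∃ N, M = N + 1 := ⟨M - 1, by omega⟩
    have hg1 : ContDiff ℝ 1 g := hg.of_le (by exact_mod_cast Nat.le_add_left 1 p)
    have hgd : ContDiff ℝ p (deriv g) := ((contDiff_succ_iff_deriv (n := p)).1
      (by exact_mod_cast hg)).2.2
    have h1 := ih M (by omega) (deriv g) hgd
    obtain ⟨Q, hQ, hQd⟩ := exists_antiderivative M (legProj M (deriv g)) (legProj_mem M _)
    have h2 := legProj_sub (M + 1) g hg1.continuous Q hQ
    have h3 := residual_first_order (M + 1) (fun y => g y - Q.eval y) (hg1.sub (by simpa only [Polynomial.coe_aeval_eq_eval] using Q.contDiff_aeval (𝕜 := ℝ) 1))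
    have hder : deriv (fun y => g y - Q.eval y) =
        fun x => deriv g x - (legProj M (deriv g)).eval x := by
      ext x
      rw [← hQd]
      exact ((hg1.differentiable one_ne_zero x).hasDerivAt.sub (Q.hasDerivAt x)).deriv
    rw [hder] at h3
    rw [iteratedDeriv_succ', Nat.succ_descFactorial_succ]
    refine le_trans ?_ h1
    push_cast at h3 ⊢
    rw [mul_comm ((M : ℝ) + 1), mul_pow, mul_assoc]
    refine mul_le_mul_of_nonneg_left (le_trans ?_ h3) (sq_nonneg _)
    exact mul_le_mul_of_nonneg_left h2 (sq_nonneg _)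

end ReferenceInterval

/-! ### Transfer to the dyadic pieces of `(0, l)` -/

section Transfer

lemma dyadic_endpoint {l : ℝ} {k : ℕ} (hk : 1 ≤ k) (y : ℝ) :
    y * l / 2 ^ (k - 1) = 2 * (l / 2 ^ k) * y := by
  obtain ⟨k, rfl⟩ : ∃ j, k = j + 1 := ⟨k - 1, by omega⟩
  rw [Nat.add_sub_cancel, pow_succ]
  field_simp

lemma wavelet_norm_sq {l : ℝ} (hl : 0 < l) (k m : ℕ) :
    ((2 : ℝ) ^ ((k : ℝ) / 2) * Real.sqrt ((2 * (m : ℝ) + 1) / (2 * l))) ^ 2 * (l / 2 ^ k) =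
      (2 * m + 1) / 2 := by
  have h : ((2 : ℝ) ^ ((k : ℝ) / 2)) ^ 2 = 2 ^ k := by
    rw [← Real.rpow_natCast, ← Real.rpow_mul (by norm_num)]
    norm_num
  rw [mul_pow, Real.sq_sqrt (by positivity), h]
  field_simp

/-- The `i`-th dyadic piece of `f` (counted from zero), rescaled to the reference interval
`[-1, 1]`; `c = l / 2^k` is half the length of a piece. -/
noncomputable def pieceFun (c : ℝ) (i : ℕ) (f : ℝ → ℝ) : ℝ → ℝ :=
  fun t => f (c * t + c * (2 * i + 1))

lemma integral_pieceFun {c : ℝ} (i : ℕ) (F : ℝ → ℝ) :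
    ∫ x in (2 * c * i)..(2 * c * (i + 1)), F x =
      c * ∫ t in (-1 : ℝ)..1, F (c * t + c * (2 * i + 1)) := by
  have h := smul_integral_comp_mul_add (a := -1) (b := 1) F c (c * (2 * i + 1))
  rw [smul_eq_mul] at h
  rw [h]
  congr 1 <;> ring

variable {l : ℝ} {k : ℕ}

lemma legWavelet_eq_indicator (hl : 0 < l) (hk : 1 ≤ k) (i m : ℕ) (x : ℝ) :
    legWavelet l k (i + 1) m x =
      (Set.Ico (2 * (l / 2 ^ k) * i) (2 * (l / 2 ^ k) * (i + 1))).indicator (fun x =>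
        (2 : ℝ) ^ ((k : ℝ) / 2) * Real.sqrt ((2 * (m : ℝ) + 1) / (2 * l)) *
          (legPoly m).eval (x / (l / 2 ^ k) - (2 * i + 1))) x := by
  have e : (2 : ℝ) ^ k / l * x - 2 * ((i + 1 : ℕ) : ℝ) + 1 = x / (l / 2 ^ k) - (2 * i + 1) := by
    push_cast
    field_simp
    ring
  rw [legWavelet, dyadic_endpoint hk, dyadic_endpoint hk, legendreP_eq, e, Set.indicator_apply]
  simp [Set.mem_Ico]

lemma top_endpoint (hk : 1 ≤ k) : 2 * (l / 2 ^ k) * ((2 ^ (k - 1) : ℕ) : ℝ) = l := by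
  rw [← dyadic_endpoint hk]
  push_cast
  field_simp

lemma waveletCoeff_eq (hl : 0 < l) (hk : 1 ≤ k) (f : ℝ → ℝ) (i m : ℕ) (hi : i < 2 ^ (k - 1)) :
    waveletCoeff l k f (i + 1) m =
      (2 : ℝ) ^ ((k : ℝ) / 2) * Real.sqrt ((2 * (m : ℝ) + 1) / (2 * l)) * (l / 2 ^ k) *
        ∫ t in (-1 : ℝ)..1, pieceFun (l / 2 ^ k) i f t * (legPoly m).eval t := by
  have hc : 0 < l / 2 ^ k := by positivity
  have htop : 2 * (l / 2 ^ k) * ((i : ℝ) + 1) ≤ l := by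
    refine le_of_le_of_eq ?_ (top_endpoint (l := l) hk)
    have : ((i : ℝ) + 1) ≤ ((2 ^ (k - 1) : ℕ) : ℝ) := by exact_mod_cast hi
    gcongr
  set c := l / 2 ^ k with hcdef
  set N := (2 : ℝ) ^ ((k : ℝ) / 2) * Real.sqrt ((2 * (m : ℝ) + 1) / (2 * l)) with hN
  have h1 : waveletCoeff l k f (i + 1) m =
      ∫ x in (2 * c * i)..(2 * c * (i + 1)),
        f x * (N * (legPoly m).eval (x / c - (2 * i + 1))) := by
    rw [waveletCoeff, intervalIntegral.integral_of_le hl.le,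
      intervalIntegral.integral_of_le (by gcongr; linarith),
      ← MeasureTheory.integral_Ico_eq_integral_Ioc, ← MeasureTheory.integral_Ico_eq_integral_Ioc]
    have hsub : Set.Ico 0 l ∩ Set.Ico (2 * c * i) (2 * c * (i + 1)) =
        Set.Ico (2 * c * i) (2 * c * (i + 1)) :=
      Set.inter_eq_right.2 (Set.Ico_subset_Ico (by positivity) htop)
    conv_rhs => rw [← hsub]
    rw [← MeasureTheory.setIntegral_indicator measurableSet_Ico]
    congr 1
    ext x
    rw [legWavelet_eq_indicator hl hk, Set.indicator_apply, Set.indicator_apply]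
    split_ifs <;> simp [hN, hcdef]
  rw [h1, integral_pieceFun, mul_comm N c, mul_assoc, ← intervalIntegral.integral_const_mul N]
  refine congrArg (c * ·) (intervalIntegral.integral_congr fun t _ => ?_)
  have : (c * t + c * (2 * i + 1)) / c - (2 * i + 1) = t := by field_simp; ring
  rw [this, pieceFun]
  ring

/-- On the `i`-th dyadic piece the wavelet projection is the rescaled Legendre projection of the
rescaled piece: the other wavelets vanish there and the normalisations combine to `(2m+1)/2`. -/
lemma waveletProj_eq (hl : 0 < l) (hk : 1 ≤ k) (M : ℕ) (f : ℝ → ℝ) (i : ℕ)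
    (hi : i < 2 ^ (k - 1)) (x : ℝ)
    (hx : x ∈ Set.Ico (2 * (l / 2 ^ k) * i) (2 * (l / 2 ^ k) * (i + 1))) :
    waveletProj l k M f x =
      (legProj M (pieceFun (l / 2 ^ k) i f)).eval (x / (l / 2 ^ k) - (2 * i + 1)) := by
  have hc : 0 < l / 2 ^ k := by positivity
  rw [waveletProj, Finset.sum_eq_single_of_mem (i + 1) (by rw [Finset.mem_Icc]; omega)]
  · rw [legProj, Polynomial.eval_finsetSum]
    refine Finset.sum_congr rfl fun m _ => ?_
    rw [waveletCoeff_eq hl hk f i m hi, legWavelet_eq_indicator hl hk, Set.indicator_of_mem hx,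
      Polynomial.eval_smul, smul_eq_mul, ← wavelet_norm_sq hl k m]
    ring
  · intro n hn hni
    obtain ⟨j, rfl⟩ : ∃ j, n = j + 1 := ⟨n - 1, by have := (Finset.mem_Icc.1 hn).1; omega⟩
    have hji : j ≠ i := by omega
    refine Finset.sum_eq_zero fun m _ => ?_
    rw [legWavelet_eq_indicator hl hk, Set.indicator_of_notMem, mul_zero]
    rintro ⟨h1, h2⟩
    have a1 : (j : ℝ) < i + 1 := lt_of_mul_lt_mul_left (h1.trans_lt hx.2) (by positivity)
    have a2 : (i : ℝ) < j + 1 := lt_of_mul_lt_mul_left (hx.1.trans_lt h2) (by positivity)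
    have b1 : j < i + 1 := by exact_mod_cast a1
    have b2 : i < j + 1 := by exact_mod_cast a2
    omega

lemma integral_eq_sum_pieces (hk : 1 ≤ k) (F : ℝ → ℝ)
    (hF : ∀ i : ℕ, i < 2 ^ (k - 1) → IntervalIntegrable F MeasureTheory.volume
      (2 * (l / 2 ^ k) * i) (2 * (l / 2 ^ k) * (i + 1))) :
    ∫ x in (0 : ℝ)..l, F x = ∑ i ∈ Finset.range (2 ^ (k - 1)),
      ∫ x in (2 * (l / 2 ^ k) * i)..(2 * (l / 2 ^ k) * (i + 1)), F x := by
  have h := intervalIntegral.sum_integral_adjacent_intervals (f := F)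
    (μ := MeasureTheory.volume) (a := fun i : ℕ => 2 * (l / 2 ^ k) * i) (n := 2 ^ (k - 1))
    (by intro i hi; simpa using hF i hi)
  rw [top_endpoint hk] at h
  simpa using h.symm

lemma iteratedDeriv_pieceFun {p : ℕ} {f : ℝ → ℝ} (hf : ContDiff ℝ p f) (c : ℝ) (i : ℕ) (t : ℝ) :
    iteratedDeriv p (pieceFun c i f) t =
      c ^ p * iteratedDeriv p f (c * t + c * (2 * i + 1)) := by
  have h := iteratedDeriv_comp_const_mul (n := p) (f := fun z => f (z + c * (2 * i + 1)))
    (hf.comp (contDiff_id.add contDiff_const)) c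
  rw [iteratedDeriv_comp_add_const] at h
  exact congrFun h t

lemma contDiff_pieceFun {p : ℕ} {f : ℝ → ℝ} (hf : ContDiff ℝ p f) (c : ℝ) (i : ℕ) :
    ContDiff ℝ p (pieceFun c i f) :=
  hf.comp ((contDiff_const.mul contDiff_id).add contDiff_const)

/-- The estimate on `(0, l)`: rescaling a piece of half-length `l / 2^k` produces the factor
`(l / 2^k)^(2p)`, and the squared errors of the pieces add up. -/
lemma wavelet_error (hl : 0 < l) (hk : 1 ≤ k) (p M : ℕ) (hpM : p ≤ M) (f : ℝ → ℝ)
    (hf : ContDiff ℝ p f) :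
    (M.descFactorial p : ℝ) ^ 2 * ∫ x in (0 : ℝ)..l, (f x - waveletProj l k M f x) ^ 2 ≤
      (l / 2 ^ k) ^ (2 * p) * ∫ x in (0 : ℝ)..l, iteratedDeriv p f x ^ 2 := by
  have hc : 0 < l / 2 ^ k := by positivity
  have cf := hf.continuous
  have cd : Continuous (iteratedDeriv p f) := hf.continuous_iteratedDeriv p le_rfl
  have heq : ∀ i : ℕ, i < 2 ^ (k - 1) → Set.EqOn
      (fun x => (f x - (legProj M (pieceFun (l / 2 ^ k) i f)).eval
        (x / (l / 2 ^ k) - (2 * i + 1))) ^ 2)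
      (fun x => (f x - waveletProj l k M f x) ^ 2)
      (Set.Ioo (2 * (l / 2 ^ k) * i) (2 * (l / 2 ^ k) * (i + 1))) := by
    intro i hi x hx
    simp only [waveletProj_eq hl hk M f i hi x ⟨hx.1.le, hx.2⟩]
  have hcont : ∀ i : ℕ, Continuous
      (fun x => (f x - (legProj M (pieceFun (l / 2 ^ k) i f)).eval
        (x / (l / 2 ^ k) - (2 * i + 1))) ^ 2) := by
    intro i
    have := (legProj M (pieceFun (l / 2 ^ k) i f)).continuous
    fun_prop
  have hle : ∀ i : ℕ, 2 * (l / 2 ^ k) * (i : ℝ) ≤ 2 * (l / 2 ^ k) * (i + 1) := by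
    intro i; gcongr; linarith
  rw [integral_eq_sum_pieces hk, integral_eq_sum_pieces hk, Finset.mul_sum, Finset.mul_sum]
  · refine Finset.sum_le_sum fun i hi => ?_
    have hi := Finset.mem_range.1 hi
    rw [← intervalIntegral.integral_congr_Ioo_of_le (hle i) (heq i hi), integral_pieceFun,
      integral_pieceFun]
    have h := residual_higher_order p M hpM _ (contDiff_pieceFun hf (l / 2 ^ k) i)
    simp only [iteratedDeriv_pieceFun hf, mul_pow] at h
    rw [intervalIntegral.integral_const_mul, ← pow_mul, mul_comm p 2] at h
    have e : ∀ t : ℝ, (l / 2 ^ k * t + l / 2 ^ k * (2 * i + 1)) / (l / 2 ^ k) - (2 * i + 1) = t := by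
      intro t; field_simp; ring
    simp only [e]
    have h' := mul_le_mul_of_nonneg_left h hc.le
    simp only [pieceFun] at h' ⊢
    linarith
  · intro i _
    exact (cd.pow 2).intervalIntegrable _ _
  · intro i hi
    refine ((hcont i).intervalIntegrable _ _).congr_uIoo ?_
    rw [Set.uIoo_of_le (hle i)]
    exact heq i hi

/-- The factor `1 / (M (M-1) ⋯ (M-p+1))` with `p = min m M` is of order `(M-1)^(-m)`, since for
`m ≤ M` every factor is at least `M / m`, and for `M < m` only finitely many `M` occur. -/
lemma descFactorial_bound (m M : ℕ) (hm : 1 ≤ m) (hM : 2 ≤ M) :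
    ((M : ℝ) - 1) ^ m ≤ (m : ℝ) ^ m * (M.descFactorial (min m M) : ℝ) := by
  have hM1 : (0 : ℝ) ≤ (M : ℝ) - 1 := by
    have : (2 : ℝ) ≤ M := by exact_mod_cast hM
    linarith
  rcases le_total m M with h | h
  · rw [min_eq_left h]
    have h1 : ((M + 1 - m : ℕ) : ℝ) ^ m ≤ (M.descFactorial m : ℝ) := by
      exact_mod_cast M.pow_sub_le_descFactorial m
    have h2 : (M : ℝ) - 1 ≤ m * ((M + 1 - m : ℕ) : ℝ) := by
      rw [Nat.cast_sub (by omega)]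
      push_cast
      have a : (1 : ℝ) ≤ m := by exact_mod_cast hm
      have b : (m : ℝ) ≤ M := by exact_mod_cast h
      nlinarith [mul_nonneg (sub_nonneg.2 a) (sub_nonneg.2 b)]
    calc ((M : ℝ) - 1) ^ m ≤ (m * ((M + 1 - m : ℕ) : ℝ)) ^ m := by gcongr
      _ = (m : ℝ) ^ m * ((M + 1 - m : ℕ) : ℝ) ^ m := mul_pow _ _ _
      _ ≤ _ := by gcongr
  · rw [min_eq_right h]
    have h1 : (1 : ℝ) ≤ (M.descFactorial M : ℝ) := by
      exact_mod_cast Nat.descFactorial_pos.2 le_rfl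
    have h2 : (M : ℝ) - 1 ≤ m := by
      have : (M : ℝ) ≤ m := by exact_mod_cast h
      linarith
    calc ((M : ℝ) - 1) ^ m ≤ (m : ℝ) ^ m * 1 := by rw [mul_one]; gcongr
      _ ≤ _ := by gcongr

end Transfer

/-- `L²` error bound for the Legendre wavelet projection:
`‖f - Ψ_{k,M-1}(f)‖_{L²(0,l)} ≤ C (M-1)^{-m} |f|_{H^{0,m,M-1,k}(0,l)}`. -/
theorem stmt_1 (m : ℕ) (hm : 1 ≤ m) (l : ℝ) (hl : 0 < l) :
    ∃ C : ℝ, 0 < C ∧ ∀ M : ℕ, 2 ≤ M → ∀ k : ℕ, 1 ≤ k →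
      ∀ f : ℝ → ℝ, ContDiff ℝ m f →
        Real.sqrt (∫ x in (0 : ℝ)..l, (f x - waveletProj l k M f x) ^ 2)
          ≤ C * ((M : ℝ) - 1) ^ (-(m : ℤ)) * semiNorm l 0 m M k f := by
  have hm0 : (0 : ℝ) < m := by exact_mod_cast hm
  refine ⟨(m : ℝ) ^ m * (1 + l) ^ m, by positivity, fun M hM k hk f hf => ?_⟩
  set p := min m M with hp
  have hpm : p ≤ m := min_le_left _ _
  have hpM : p ≤ M := min_le_right _ _
  have hM1 : (0 : ℝ) < (M : ℝ) - 1 := by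
    have : (2 : ℝ) ≤ M := by exact_mod_cast hM
    linarith
  have herr := wavelet_error hl hk p M hpM f (hf.of_le (by exact_mod_cast hpm))
  have hD : (0 : ℝ) < (M.descFactorial p : ℝ) := by
    exact_mod_cast Nat.descFactorial_pos.2 hpM
  -- Of the seminorm only the term `j = p` is needed.
  have hterm : ((2 : ℝ) ^ k) ^ (2 * ((0 : ℕ) : ℤ) - 2 * (p : ℤ)) *
      ∫ x in (0 : ℝ)..l, (iteratedDeriv p f x) ^ 2 ≤ semiNorm l 0 m M k f ^ 2 := by
    have hnn : ∀ j ∈ Finset.Icc (min m M) m, 0 ≤ ((2 : ℝ) ^ k) ^ (2 * ((0 : ℕ) : ℤ) - 2 * (j : ℤ)) *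
        ∫ x in (0 : ℝ)..l, (iteratedDeriv j f x) ^ 2 := fun j _ =>
      mul_nonneg (by positivity) (integral_nonneg hl.le fun x _ => sq_nonneg _)
    rw [semiNorm, Real.sq_sqrt (Finset.sum_nonneg hnn)]
    exact Finset.single_le_sum hnn (Finset.mem_Icc.2 ⟨le_rfl, hpm⟩)
  have hz : ((2 : ℝ) ^ k) ^ (2 * ((0 : ℕ) : ℤ) - 2 * (p : ℤ)) = (((2 : ℝ) ^ k) ^ (2 * p))⁻¹ := by
    rw [← zpow_natCast ((2 : ℝ) ^ k) (2 * p), ← zpow_neg]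
    congr 1
    push_cast
    ring
  have hsn : 0 ≤ semiNorm l 0 m M k f := Real.sqrt_nonneg _
  have hmain : (M.descFactorial p : ℝ) ^ 2 *
      ∫ x in (0 : ℝ)..l, (f x - waveletProj l k M f x) ^ 2 ≤
        (l ^ p * semiNorm l 0 m M k f) ^ 2 := by
    refine herr.trans ?_
    rw [hz] at hterm
    have := mul_le_mul_of_nonneg_left hterm (by positivity : 0 ≤ l ^ (2 * p))
    rw [mul_pow, ← pow_mul, mul_comm p 2, div_pow, div_eq_mul_inv, mul_assoc]
    exact this
  have hlp : l ^ p ≤ (1 + l) ^ m :=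
    (pow_le_pow_left₀ hl.le (by linarith) p).trans (pow_le_pow_right₀ (by linarith) hpm)
  have hroot : (M.descFactorial p : ℝ) *
      Real.sqrt (∫ x in (0 : ℝ)..l, (f x - waveletProj l k M f x) ^ 2) ≤
        l ^ p * semiNorm l 0 m M k f := by
    refine abs_le_of_sq_le_sq' ?_ (by positivity) |>.2
    rw [mul_pow, Real.sq_sqrt (integral_nonneg hl.le fun x _ => sq_nonneg _)]
    exact hmain
  have hdf := descFactorial_bound m M hm hM
  rw [zpow_neg, zpow_natCast, ← div_eq_mul_inv, div_mul_eq_mul_div, le_div_iff₀ (by positivity)]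
  set E := Real.sqrt (∫ x in (0 : ℝ)..l, (f x - waveletProj l k M f x) ^ 2)
  calc E * ((M : ℝ) - 1) ^ m
      ≤ E * ((m : ℝ) ^ m * (M.descFactorial p : ℝ)) :=
        mul_le_mul_of_nonneg_left hdf (Real.sqrt_nonneg _)
    _ = (m : ℝ) ^ m * ((M.descFactorial p : ℝ) * E) := by ring
    _ ≤ (m : ℝ) ^ m * (l ^ p * semiNorm l 0 m M k f) := by gcongr
    _ ≤ (m : ℝ) ^ m * ((1 + l) ^ m * semiNorm l 0 m M k f) := by gcongr
    _ = _ := by ring
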